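/- arXiv:1404.3854 — 4 statements merged into one kernel-verified Lean document; each statement's English description precedes it below -/
import Mathlib

section
/- Fix F ∈ ℍ_V. The map sending g to the restriction of its complexification g_ℂ to F is a group isomorphism from the stabilizer {g ∈ Sp(V,a) : g_ℂ(F) = F} onto the unitary group of the hermitian space (F, h|F×F). In particular this stabilizer is isomorphic to U(g). -/
open TensorProduct Module

noncomputable section

instance : RingHomSurjective (starRingEnd ℂ) :=
  ⟨fun z => ⟨(starRingEnd ℂ) z, by simp⟩⟩

variable {V : Type*} [AddCommGroup V] [Module ℝ V]

/-- The conjugation of `V_ℂ = ℂ ⊗[ℝ] V` induced by complex conjugation on `ℂ`. -/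
def conjC (V : Type*) [AddCommGroup V] [Module ℝ V] :
    (ℂ ⊗[ℝ] V) →ₛₗ[starRingEnd ℂ] (ℂ ⊗[ℝ] V) where
  toFun := TensorProduct.map Complex.conjAe.toLinearMap LinearMap.id
  map_add' x y := map_add _ x y
  map_smul' c x := by
    induction x using TensorProduct.induction_on with
    | zero => simp
    | tmul z v =>
        simp [TensorProduct.smul_tmul', smul_eq_mul, map_mul]
    | add x y hx hy => simp_all [smul_add]

/-- The hermitian form `h(v,w) = √-1 ⬝ a_ℂ(v, conj w)` associated to a real
symplectic form `a`. -/
def hermSymp (a : LinearMap.BilinForm ℝ V) (v w : ℂ ⊗[ℝ] V) : ℂ :=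
  Complex.I * (LinearMap.BilinForm.baseChange ℂ a) v (conjC V w)

/-- Membership in `ℍ_V`: a `g`-dimensional complex subspace of `V_ℂ` that is totally
isotropic for `a_ℂ` and on which `h` is positive definite. -/
def InHV (a : LinearMap.BilinForm ℝ V) (g : ℕ) (F : Submodule ℂ (ℂ ⊗[ℝ] V)) : Prop :=
  Module.finrank ℂ F = g ∧
  (∀ v ∈ F, ∀ w ∈ F, (LinearMap.BilinForm.baseChange ℂ a) v w = 0) ∧
  (∀ v ∈ F, v ≠ 0 → ∃ r : ℝ, 0 < r ∧ hermSymp a v v = r)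


section helpers

lemma conjC_tmul (z : ℂ) (v : V) :
    conjC V (z ⊗ₜ[ℝ] v) = (starRingEnd ℂ z) ⊗ₜ[ℝ] v := rfl

lemma conjC_conjC (x : ℂ ⊗[ℝ] V) : conjC V (conjC V x) = x := by
  induction x using TensorProduct.induction_on with
  | zero => simp
  | tmul z v => simp [conjC_tmul]
  | add x y hx hy => simp [map_add, hx, hy]

/-- The real part map. -/
def reC (V : Type*) [AddCommGroup V] [Module ℝ V] : (ℂ ⊗[ℝ] V) →ₗ[ℝ] V :=
  (TensorProduct.lid ℝ V).toLinearMap ∘ₗ TensorProduct.map Complex.reLm LinearMap.id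

lemma reC_tmul (z : ℂ) (v : V) : reC V (z ⊗ₜ[ℝ] v) = z.re • v := by
  simp [reC]

lemma add_conjC (x : ℂ ⊗[ℝ] V) : x + conjC V x = (2 : ℂ) • ((1 : ℂ) ⊗ₜ[ℝ] reC V x) := by
  induction x using TensorProduct.induction_on with
  | zero => simp
  | tmul z v =>
      rw [conjC_tmul, reC_tmul, ← TensorProduct.add_tmul, ← TensorProduct.smul_tmul,
        TensorProduct.smul_tmul']
      congr 1
      apply Complex.ext <;> simp [two_mul]
  | add x y hx hy =>
      rw [map_add, map_add, TensorProduct.tmul_add, smul_add, ← hx, ← hy]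
      abel

lemma bc_conjC (f : V →ₗ[ℝ] V) (x : ℂ ⊗[ℝ] V) :
    LinearMap.baseChange ℂ f (conjC V x) = conjC V (LinearMap.baseChange ℂ f x) := by
  induction x using TensorProduct.induction_on with
  | zero => simp
  | tmul z v => simp [conjC_tmul]
  | add x y hx hy => simp [map_add, hx, hy]

lemma reC_bc (f : V →ₗ[ℝ] V) (x : ℂ ⊗[ℝ] V) :
    reC V (LinearMap.baseChange ℂ f x) = f (reC V x) := by
  induction x using TensorProduct.induction_on with
  | zero => simp
  | tmul z v => simp [reC_tmul]
  | add x y hx hy => simp [map_add, hx, hy]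

lemma form_conjC (a : LinearMap.BilinForm ℝ V) (x y : ℂ ⊗[ℝ] V) :
    (LinearMap.BilinForm.baseChange ℂ a) (conjC V x) (conjC V y) =
      starRingEnd ℂ ((LinearMap.BilinForm.baseChange ℂ a) x y) := by
  induction x using TensorProduct.induction_on with
  | zero => simp
  | tmul z v =>
    induction y using TensorProduct.induction_on with
    | zero => simp
    | tmul w u => simp [conjC_tmul, LinearMap.BilinForm.baseChange_tmul]
    | add x y hx hy => simp only [map_add, hx, hy]
  | add x y hx hy => simp only [map_add, hx, hy, LinearMap.add_apply]

lemma form_swap (a : LinearMap.BilinForm ℝ V) (halt : LinearMap.IsAlt a) (x y : ℂ ⊗[ℝ] V) :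
    (LinearMap.BilinForm.baseChange ℂ a) x y = - (LinearMap.BilinForm.baseChange ℂ a) y x := by
  induction x using TensorProduct.induction_on with
  | zero => simp
  | tmul z v =>
    induction y using TensorProduct.induction_on with
    | zero => simp
    | tmul w u =>
      rw [LinearMap.BilinForm.baseChange_tmul, LinearMap.BilinForm.baseChange_tmul,
        ← halt.neg u v, mul_comm z w, neg_smul]
    | add x y hx hy => simp only [map_add, hx, hy, LinearMap.add_apply, neg_add]
  | add x y hx hy => simp only [map_add, hx, hy, LinearMap.add_apply, neg_add]

lemma form_bc (a : LinearMap.BilinForm ℝ V) (f : V →ₗ[ℝ] V)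
    (hf : ∀ v w, a (f v) (f w) = a v w) (x y : ℂ ⊗[ℝ] V) :
    (LinearMap.BilinForm.baseChange ℂ a) (LinearMap.baseChange ℂ f x)
      (LinearMap.baseChange ℂ f y) = (LinearMap.BilinForm.baseChange ℂ a) x y := by
  induction x using TensorProduct.induction_on with
  | zero => simp
  | tmul z v =>
    induction y using TensorProduct.induction_on with
    | zero => simp
    | tmul w u =>
      rw [LinearMap.baseChange_tmul, LinearMap.baseChange_tmul,
        LinearMap.BilinForm.baseChange_tmul, LinearMap.BilinForm.baseChange_tmul, hf]
    | add x y hx hy => simp only [map_add, hx, hy]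
  | add x y hx hy => simp only [map_add, hx, hy, LinearMap.add_apply]

lemma herm_bc (a : LinearMap.BilinForm ℝ V) (f : V →ₗ[ℝ] V)
    (hf : ∀ v w, a (f v) (f w) = a v w) (x y : ℂ ⊗[ℝ] V) :
    hermSymp a (LinearMap.baseChange ℂ f x) (LinearMap.baseChange ℂ f y) = hermSymp a x y := by
  unfold hermSymp
  rw [← bc_conjC, form_bc a f hf]

lemma herm_symm (a : LinearMap.BilinForm ℝ V) (halt : LinearMap.IsAlt a) (x y : ℂ ⊗[ℝ] V) :
    starRingEnd ℂ (hermSymp a x y) = hermSymp a y x := by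
  unfold hermSymp
  rw [map_mul, ← form_conjC, conjC_conjC, form_swap a halt]
  simp

/-- On an isotropic subspace, the form of the real parts is determined by `h`. -/
lemma form_re (a : LinearMap.BilinForm ℝ V) (x y : ℂ ⊗[ℝ] V)
    (h : (LinearMap.BilinForm.baseChange ℂ a) x y = 0) :
    (4 * (a (reC V x) (reC V y) : ℝ) : ℂ) =
      -Complex.I * hermSymp a x y + starRingEnd ℂ (-Complex.I * hermSymp a x y) := by
  have e1 : (LinearMap.BilinForm.baseChange ℂ a) (x + conjC V x) (y + conjC V y) =
      (4 * (a (reC V x) (reC V y) : ℝ) : ℂ) := by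
    rw [add_conjC, add_conjC]
    simp only [map_smul, LinearMap.smul_apply, LinearMap.BilinForm.baseChange_tmul, smul_eq_mul,
      Complex.real_smul]
    ring
  have e2 : -Complex.I * hermSymp a x y =
      (LinearMap.BilinForm.baseChange ℂ a) x (conjC V y) := by
    unfold hermSymp
    rw [← mul_assoc]; simp
  rw [← e1, e2, ← form_conjC, conjC_conjC]
  simp only [map_add, LinearMap.add_apply, form_conjC, h, map_zero]
  ring

lemma reC_inj (a : LinearMap.BilinForm ℝ V) (g : ℕ) (F : Submodule ℂ (ℂ ⊗[ℝ] V))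
    (hF : InHV a g F) (x : ℂ ⊗[ℝ] V) (hx : x ∈ F) (h0 : reC V x = 0) : x = 0 := by
  by_contra hne
  obtain ⟨r, hr, h⟩ := hF.2.2 x hx hne
  have h1 := add_conjC x
  rw [h0, TensorProduct.tmul_zero, smul_zero] at h1
  have h2 : conjC V x = -x := (neg_eq_of_add_eq_zero_right h1).symm
  unfold hermSymp at h
  rw [h2, map_neg, hF.2.1 x hx x hx] at h
  simp at h
  exact hr.ne (by exact_mod_cast h)

/-- `F` is real-isomorphic to `V` by the real part. -/
lemma exists_reEquiv [FiniteDimensional ℝ V] (g : ℕ) (hdim : Module.finrank ℝ V = 2 * g)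
    (a : LinearMap.BilinForm ℝ V) (F : Submodule ℂ (ℂ ⊗[ℝ] V)) (hF : InHV a g F) :
    ∃ e : F ≃ₗ[ℝ] V, ∀ x : F, e x = reC V (x : ℂ ⊗[ℝ] V) := by
  haveI : FiniteDimensional ℝ F := FiniteDimensional.trans ℝ ℂ F
  let f : F →ₗ[ℝ] V := reC V ∘ₗ (F.subtype.restrictScalars ℝ)
  have hf : Function.Injective f := by
    rw [← LinearMap.ker_eq_bot, LinearMap.ker_eq_bot']
    intro x hx
    exact Subtype.ext (reC_inj a g F hF x x.2 hx)
  have hd : Module.finrank ℝ F = Module.finrank ℝ V := by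
    rw [← Module.finrank_mul_finrank ℝ ℂ F, Complex.finrank_real_complex, hF.1, hdim]
  exact ⟨LinearMap.linearEquivOfInjective f hf hd, fun x => rfl⟩

/-- Orthonormal coordinates. -/
lemma exists_onb [FiniteDimensional ℝ V] (g : ℕ)
    (a : LinearMap.BilinForm ℝ V) (halt : LinearMap.IsAlt a)
    (F : Submodule ℂ (ℂ ⊗[ℝ] V)) (hF : InHV a g F) :
    ∃ b : Basis (Fin g) ℂ F, ∀ x y : F, hermSymp a (x : ℂ ⊗[ℝ] V) (y : ℂ ⊗[ℝ] V) =
      star ⇑(b.repr y) ⬝ᵥ ⇑(b.repr x) := by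
  let c : InnerProductSpace.Core ℂ F :=
    { inner := fun x y => hermSymp a (y : ℂ ⊗[ℝ] V) (x : ℂ ⊗[ℝ] V)
      conj_inner_symm := fun x y => herm_symm a halt _ _
      re_inner_nonneg := fun x => by
        by_cases hx : (x : ℂ ⊗[ℝ] V) = 0
        · simp [hermSymp, hx]
        · obtain ⟨r, hr, h⟩ := hF.2.2 x x.2 hx
          rw [h]; simpa using hr.le
      add_left := fun x y z => by simp [hermSymp, mul_add]
      smul_left := fun x y r => by simp [hermSymp]; ring
      definite := fun x h0 => by
        by_contra hne
        have hx : (x : ℂ ⊗[ℝ] V) ≠ 0 := fun h => hne (Subtype.ext h)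
        obtain ⟨r, hr, h⟩ := hF.2.2 x x.2 hx
        rw [h] at h0
        exact hr.ne' (by exact_mod_cast h0) }
  letI : NormedAddCommGroup F := c.toNormedAddCommGroup
  letI : InnerProductSpace ℂ F := InnerProductSpace.ofCore c.toCore
  let b := (stdOrthonormalBasis ℂ F).reindex (finCongr hF.1)
  refine ⟨b.toBasis, fun x y => ?_⟩
  have h1 : hermSymp a (x : ℂ ⊗[ℝ] V) (y : ℂ ⊗[ℝ] V) = inner ℂ y x := rfl
  rw [h1, ← b.sum_inner_mul_inner]
  simp only [dotProduct, Pi.star_apply, b.coe_toBasis_repr_apply, b.repr_apply_apply]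
  refine Finset.sum_congr rfl fun i _ => ?_
  rw [RCLike.star_def, inner_conj_symm]

lemma unitary_matrix {E : Type*} [AddCommGroup E] [Module ℂ E] (g : ℕ) (b : Basis (Fin g) ℂ E)
    (H : E → E → ℂ) (hH : ∀ x y, H x y = star ⇑(b.repr y) ⬝ᵥ ⇑(b.repr x)) :
    ∃ Ψ : {u : E ≃ₗ[ℂ] E // ∀ x y, H (u x) (u y) = H x y} → Matrix.unitaryGroup (Fin g) ℂ,
      Function.Bijective Ψ ∧ ∀ σ τ ρ, ρ.1 = σ.1 * τ.1 → Ψ ρ = Ψ σ * Ψ τ := by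
  have hmem : ∀ u : E →ₗ[ℂ] E, (∀ x y, H (u x) (u y) = H x y) ↔
      LinearMap.toMatrix b b u ∈ Matrix.unitaryGroup (Fin g) ℂ := by
    intro u
    rw [Matrix.mem_unitaryGroup_iff', Matrix.star_eq_conjTranspose]
    set M := LinearMap.toMatrix b b u with hM
    have key : ∀ x y, H (u x) (u y) =
        star ⇑(b.repr y) ⬝ᵥ ((M.conjTranspose * M).mulVec ⇑(b.repr x)) := by
      intro x y
      rw [hH, ← LinearMap.toMatrix_mulVec_repr b b u x, ← LinearMap.toMatrix_mulVec_repr b b u y,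
        Matrix.star_mulVec, ← Matrix.dotProduct_mulVec, Matrix.mulVec_mulVec]
    constructor
    · intro h
      ext i j
      have := h (b j) (b i)
      rw [key, hH] at this
      simpa [Matrix.one_apply, Finsupp.single_apply, Finsupp.single_eq_pi_single,
        Pi.single_apply, eq_comm] using this
    · intro h x y
      rw [key, hH, h, Matrix.one_mulVec]
  refine ⟨fun u => ⟨LinearMap.toMatrix b b u.1.toLinearMap, (hmem _).1 u.2⟩, ⟨?_, ?_⟩, ?_⟩
  · intro u v h
    have h1 := congrArg Subtype.val h
    have h2 := (LinearMap.toMatrix b b).injective h1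
    exact Subtype.ext (LinearEquiv.toLinearMap_injective h2)
  · intro M
    have h1 := Matrix.mem_unitaryGroup_iff.1 M.2
    have h2 := Matrix.mem_unitaryGroup_iff'.1 M.2
    let u : E ≃ₗ[ℂ] E := Matrix.toLinOfInv b b h1 h2
    have hu : LinearMap.toMatrix b b u.toLinearMap = M.1 := LinearMap.toMatrix_toLin b b M.1
    exact ⟨⟨u, (hmem u.toLinearMap).2 (hu ▸ M.2)⟩, Subtype.ext hu⟩
  · intro σ τ ρ h
    apply Subtype.ext
    change LinearMap.toMatrix b b ρ.1.toLinearMap = LinearMap.toMatrix b b σ.1.toLinearMap *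
      LinearMap.toMatrix b b τ.1.toLinearMap
    rw [h, ← LinearMap.toMatrix_comp]
    rfl

lemma first_part
    [FiniteDimensional ℝ V] (g : ℕ)
    (hdim : Module.finrank ℝ V = 2 * g)
    (a : LinearMap.BilinForm ℝ V)
    (F : Submodule ℂ (ℂ ⊗[ℝ] V)) (hF : InHV a g F) :
    (∃ Φ : {σ : V ≃ₗ[ℝ] V // (∀ v w : V, a (σ v) (σ w) = a v w) ∧
            Submodule.map (LinearMap.baseChange ℂ (σ : V →ₗ[ℝ] V)) F = F} →
          {u : F ≃ₗ[ℂ] F // ∀ x y : F,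
            hermSymp a (u x : ℂ ⊗[ℝ] V) (u y : ℂ ⊗[ℝ] V) =
              hermSymp a (x : ℂ ⊗[ℝ] V) (y : ℂ ⊗[ℝ] V)},
      Function.Bijective Φ ∧
      (∀ σ (x : F), (((Φ σ : F ≃ₗ[ℂ] F) x : F) : ℂ ⊗[ℝ] V) =
        LinearMap.baseChange ℂ (σ.1 : V →ₗ[ℝ] V) (x : ℂ ⊗[ℝ] V)) ∧
      (∀ σ τ ρ, ρ.1 = σ.1 * τ.1 → (Φ ρ).1 = (Φ σ).1 * (Φ τ).1)) := by
  obtain ⟨e, he⟩ := exists_reEquiv g hdim a F hF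
  let R : ∀ σ : {σ : V ≃ₗ[ℝ] V // (∀ v w : V, a (σ v) (σ w) = a v w) ∧
            Submodule.map (LinearMap.baseChange ℂ (σ : V →ₗ[ℝ] V)) F = F}, F ≃ₗ[ℂ] F :=
    fun σ => LinearEquiv.ofSubmodules (LinearEquiv.baseChange ℝ ℂ V V σ.1) F F σ.2.2
  have hR : ∀ σ (x : F), ((R σ x : F) : ℂ ⊗[ℝ] V) =
        LinearMap.baseChange ℂ (σ.1 : V →ₗ[ℝ] V) (x : ℂ ⊗[ℝ] V) := fun σ x => rfl
  refine ⟨fun σ => ⟨R σ, fun x y => ?_⟩, ⟨?_, ?_⟩, hR, ?_⟩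
  · rw [hR, hR]
    exact herm_bc a _ σ.2.1 _ _
  · intro σ τ h
    have h1 : R σ = R τ := congrArg Subtype.val h
    apply Subtype.ext
    ext v
    obtain ⟨x, rfl⟩ := e.surjective v
    have h2 := hR σ x
    rw [h1, hR] at h2
    have h3 := congrArg (reC V) h2
    rw [reC_bc, reC_bc, ← he] at h3
    exact h3.symm
  · rintro ⟨u, hu⟩
    let σ : V ≃ₗ[ℝ] V := (e.symm.trans (u.restrictScalars ℝ)).trans e
    have hσ : ∀ x : F, σ (e x) = e (u x) := fun x => by simp [σ]
    have hadd : ∀ x : F, LinearMap.baseChange ℂ (σ : V →ₗ[ℝ] V) (x : ℂ ⊗[ℝ] V) +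
        conjC V (LinearMap.baseChange ℂ (σ : V →ₗ[ℝ] V) (x : ℂ ⊗[ℝ] V)) =
        (u x : ℂ ⊗[ℝ] V) + conjC V (u x : ℂ ⊗[ℝ] V) := by
      intro x
      rw [add_conjC, add_conjC, reC_bc, ← he, ← he]
      congr 2
      exact hσ x
    have hx : ∀ x : F, LinearMap.baseChange ℂ (σ : V →ₗ[ℝ] V) (x : ℂ ⊗[ℝ] V) =
        (u x : ℂ ⊗[ℝ] V) := by
      intro x
      have h1 := hadd x
      have h2 := hadd (Complex.I • x)
      simp only [map_smul, Submodule.coe_smul, LinearMap.map_smulₛₗ, Complex.conj_I] at h2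
      have h3 := congrArg (fun y => (-Complex.I) • y) h2
      simp only [smul_add, smul_smul, neg_mul, smul_neg, Complex.I_mul_I, neg_neg, one_smul,
        neg_smul] at h3
      have h4 := congrArg₂ (· + ·) h1 h3
      have h5 : (2 : ℂ) • (LinearMap.baseChange ℂ (σ : V →ₗ[ℝ] V) (x : ℂ ⊗[ℝ] V)) =
        (2 : ℂ) • (u x : ℂ ⊗[ℝ] V) := by
        rw [two_smul, two_smul]
        convert h4 using 1 <;> abel
      exact smul_right_injective _ (two_ne_zero) h5
    refine ⟨⟨σ, ?_, ?_⟩, ?_⟩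
    · intro v w
      obtain ⟨x, rfl⟩ := e.surjective v
      obtain ⟨y, rfl⟩ := e.surjective w
      rw [hσ, hσ]
      have h1 := form_re a (u x : ℂ ⊗[ℝ] V) (u y : ℂ ⊗[ℝ] V) (hF.2.1 _ (u x).2 _ (u y).2)
      rw [hu, ← form_re a (x : ℂ ⊗[ℝ] V) (y : ℂ ⊗[ℝ] V) (hF.2.1 _ x.2 _ y.2),
        ← he, ← he, ← he, ← he] at h1
      have h2 := mul_left_cancel₀ (by norm_num) h1
      exact_mod_cast h2
    · ext z
      constructor
      · rintro ⟨x, hxF, rfl⟩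
        rw [hx ⟨x, hxF⟩]
        exact (u _).2
      · intro hz
        refine ⟨u.symm ⟨z, hz⟩, (u.symm ⟨z, hz⟩).2, ?_⟩
        rw [hx]; simp
    · apply Subtype.ext
      ext x
      exact hx x
  · intro σ τ ρ h
    ext x
    change ((R ρ x : F) : ℂ ⊗[ℝ] V) = (R σ (R τ x) : F)
    rw [hR, hR, hR, h, ← LinearMap.comp_apply, ← LinearMap.baseChange_comp]
    rfl

end helpers

/-- for `F ∈ ℍ_V`, the map sending `g` to the restriction of `g_ℂ` to `F`
is a group isomorphism from the stabilizer `{g ∈ Sp(V,a) : g_ℂ(F) = F}` onto the unitary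
group of `(F, h|F×F)`; in particular this stabilizer is isomorphic to `U(g)`. -/
theorem stabilizer_iso_unitary
    [FiniteDimensional ℝ V] (g : ℕ) (hg : 1 ≤ g)
    (hdim : Module.finrank ℝ V = 2 * g)
    (a : LinearMap.BilinForm ℝ V)
    (halt : LinearMap.IsAlt a) (hnd : LinearMap.BilinForm.Nondegenerate a)
    (F : Submodule ℂ (ℂ ⊗[ℝ] V)) (hF : InHV a g F) :
    (∃ Φ : {σ : V ≃ₗ[ℝ] V // (∀ v w : V, a (σ v) (σ w) = a v w) ∧
            Submodule.map (LinearMap.baseChange ℂ (σ : V →ₗ[ℝ] V)) F = F} →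
          {u : F ≃ₗ[ℂ] F // ∀ x y : F,
            hermSymp a (u x : ℂ ⊗[ℝ] V) (u y : ℂ ⊗[ℝ] V) =
              hermSymp a (x : ℂ ⊗[ℝ] V) (y : ℂ ⊗[ℝ] V)},
      Function.Bijective Φ ∧
      (∀ σ (x : F), (((Φ σ : F ≃ₗ[ℂ] F) x : F) : ℂ ⊗[ℝ] V) =
        LinearMap.baseChange ℂ (σ.1 : V →ₗ[ℝ] V) (x : ℂ ⊗[ℝ] V)) ∧
      (∀ σ τ ρ, ρ.1 = σ.1 * τ.1 → (Φ ρ).1 = (Φ σ).1 * (Φ τ).1)) ∧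
    (∃ Ψ : {σ : V ≃ₗ[ℝ] V // (∀ v w : V, a (σ v) (σ w) = a v w) ∧
            Submodule.map (LinearMap.baseChange ℂ (σ : V →ₗ[ℝ] V)) F = F} →
          Matrix.unitaryGroup (Fin g) ℂ,
      Function.Bijective Ψ ∧
      (∀ σ τ ρ, ρ.1 = σ.1 * τ.1 → Ψ ρ = Ψ σ * Ψ τ)) := by
  have h1 := first_part g hdim a F hF
  refine ⟨h1, ?_⟩
  obtain ⟨Φ, hbij, -, hmul⟩ := h1
  obtain ⟨b, hb⟩ := exists_onb g a halt F hF
  obtain ⟨Ψ, hΨ, hΨm⟩ := unitary_matrix g b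
    (fun x y : F => hermSymp a (x : ℂ ⊗[ℝ] V) (y : ℂ ⊗[ℝ] V)) hb
  exact ⟨fun σ => Ψ (Φ σ), hΨ.comp hbij, fun σ τ ρ h => hΨm _ _ _ (hmul σ τ ρ h)⟩

end
end

section
/- Let I ⊂ V be a subspace that is totally isotropic for a, of dimension k, with a-annihilator I^⊥ := {v ∈ V : a(v, I) = 0}. Then for every F ∈ ℍ_V: (i) F ∩ I_ℂ = {0}; (ii) the quotient map V_ℂ → V_ℂ/I^⊥_ℂ maps F onto V_ℂ/I^⊥_ℂ; (iii) the quotient map V_ℂ → V_ℂ/I_ℂ maps F ∩ I^⊥_ℂ isomorphically onto a (g−k)-dimensional subspace F_I of (I^⊥/I)_ℂ that is totally isotropic for the (nondegenerate) symplectic form induced by a on I^⊥/I and on which the associated hermitian form is positive definite; that is, F_I ∈ ℍ_{I^⊥/I}. -/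
open TensorProduct Module

noncomputable section

variable {V : Type*} [AddCommGroup V] [Module ℝ V]

lemma aux_vanish (a : LinearMap.BilinForm ℝ V) (P Q : Submodule ℝ V)
    (h : ∀ x ∈ P, ∀ y ∈ Q, a x y = 0) :
    ∀ x ∈ P.baseChange ℂ, ∀ y ∈ Q.baseChange ℂ,
      (LinearMap.BilinForm.baseChange ℂ a) x y = 0 := by
  intro x hx y hy
  rw [Submodule.baseChange_eq_span] at hx hy
  induction hx using Submodule.span_induction with
  | zero => simp
  | add x x' _ _ hx hx' => simp [hx, hx']
  | smul c x _ hx => simp [hx]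
  | mem x hx =>
    induction hy using Submodule.span_induction with
    | zero => simp
    | add x x' _ _ hx hx' => simp [hx, hx']
    | smul c x _ hx => simp [hx]
    | mem y hy =>
      obtain ⟨u, hu, rfl⟩ := hx
      obtain ⟨v, hv, rfl⟩ := hy
      simp [LinearMap.BilinForm.baseChange_tmul, h u hu v hv]

lemma aux_conj (P : Submodule ℝ V) (x : ℂ ⊗[ℝ] V) (hx : x ∈ P.baseChange ℂ) :
    conjC V x ∈ P.baseChange ℂ := by
  rw [Submodule.baseChange_eq_span] at hx
  induction hx using Submodule.span_induction with
  | zero => simp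
  | add x x' _ _ hx hx' => rw [map_add]; exact add_mem hx hx'
  | smul c x _ hx => rw [LinearMap.map_smulₛₗ]; exact Submodule.smul_mem _ _ hx
  | mem x hx =>
    obtain ⟨u, hu, rfl⟩ := hx
    have : conjC V (1 ⊗ₜ[ℝ] u) = 1 ⊗ₜ[ℝ] u := by simp [conjC]
    simpa [this] using Submodule.tmul_mem_baseChange_of_mem (1 : ℂ) hu

lemma aux_nondeg [FiniteDimensional ℝ V] (a : LinearMap.BilinForm ℝ V)
    (hnd : LinearMap.BilinForm.Nondegenerate a) :
    (LinearMap.BilinForm.baseChange ℂ a).Nondegenerate := by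
  let b := Module.finBasis ℝ V
  rw [LinearMap.BilinForm.nondegenerate_iff_det_ne_zero (b.baseChange ℂ)]
  have h := (LinearMap.BilinForm.nondegenerate_iff_det_ne_zero b).1 hnd
  have e : LinearMap.BilinForm.toMatrix (b.baseChange ℂ) (LinearMap.BilinForm.baseChange ℂ a)
      = (algebraMap ℝ ℂ).mapMatrix (LinearMap.BilinForm.toMatrix b a) := by
    ext i j
    simp [LinearMap.BilinForm.toMatrix_apply, LinearMap.BilinForm.baseChange_tmul]
  rw [e, ← RingHom.map_det]
  simpa using h

lemma aux_finrank [FiniteDimensional ℝ V] (P : Submodule ℝ V) :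
    finrank ℂ (P.baseChange ℂ) = finrank ℝ P := by
  have hinj : Function.Injective (P.subtype.baseChange ℂ) :=
    Module.Flat.lTensor_preserves_injective_linearMap (M := ℂ) P.subtype P.subtype_injective
  have := LinearMap.finrank_range_of_inj hinj
  rw [Module.finrank_baseChange] at this
  exact this

/-- let `I ⊂ V` be a `k`-dimensional totally isotropic subspace with
`a`-annihilator `I^⊥`.  Then for every `F ∈ ℍ_V`: (i) `F ∩ I_ℂ = 0`; (ii) `F` maps onto
`V_ℂ/I^⊥_ℂ`; (iii) the quotient map `V_ℂ → V_ℂ/I_ℂ` maps `F ∩ I^⊥_ℂ` isomorphically onto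
a `(g-k)`-dimensional subspace `F_I` of `(I^⊥/I)_ℂ` that is totally isotropic for the
induced symplectic form and on which the induced hermitian form is positive definite,
i.e. `F_I ∈ ℍ_{I^⊥/I}` (expressed via representatives in `I^⊥_ℂ`). -/
theorem projection_of_HV_along_isotropic
    [FiniteDimensional ℝ V] (g : ℕ) (hg : 1 ≤ g)
    (hdim : Module.finrank ℝ V = 2 * g)
    (a : LinearMap.BilinForm ℝ V)
    (halt : LinearMap.IsAlt a) (hnd : LinearMap.BilinForm.Nondegenerate a)
    (k : ℕ) (I : Submodule ℝ V) (hI : Module.finrank ℝ I = k)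
    (hIiso : ∀ x ∈ I, ∀ y ∈ I, a x y = 0)
    (Iperp : Submodule ℝ V) (hIperp : ∀ v : V, v ∈ Iperp ↔ ∀ x ∈ I, a v x = 0)
    (F : Submodule ℂ (ℂ ⊗[ℝ] V)) (hF : InHV a g F) :
    -- (i)
    F ⊓ I.baseChange ℂ = ⊥ ∧
    -- (ii)
    Submodule.map (Iperp.baseChange ℂ).mkQ F = ⊤ ∧
    -- (iii) injectivity of the quotient map `V_ℂ → V_ℂ/I_ℂ` on `F ⊓ I^⊥_ℂ` ...
    (F ⊓ Iperp.baseChange ℂ) ⊓ I.baseChange ℂ = ⊥ ∧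
    -- ... the image `F_I` is `(g-k)`-dimensional and lies in `(I^⊥/I)_ℂ` ...
    Module.finrank ℂ
      ↥(Submodule.map (I.baseChange ℂ).mkQ (F ⊓ Iperp.baseChange ℂ)) = g - k ∧
    Submodule.map (I.baseChange ℂ).mkQ (F ⊓ Iperp.baseChange ℂ) ≤
      Submodule.map (I.baseChange ℂ).mkQ (Iperp.baseChange ℂ) ∧
    -- ... and, in terms of representatives in `I^⊥_ℂ`, it is totally isotropic for the
    -- induced symplectic form and positive definite for the induced hermitian form:
    (∀ v ∈ F ⊓ Iperp.baseChange ℂ, ∀ w ∈ F ⊓ Iperp.baseChange ℂ,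
      (LinearMap.BilinForm.baseChange ℂ a) v w = 0) ∧
    (∀ v ∈ F ⊓ Iperp.baseChange ℂ, v ∉ I.baseChange ℂ →
      ∃ r : ℝ, 0 < r ∧ hermSymp a v v = r) := by
  obtain ⟨hFd, hFi, hFp⟩ := hF
  have hP : Iperp = a.orthogonal I := by
    ext v
    rw [hIperp, LinearMap.BilinForm.mem_orthogonal_iff]
    refine forall₂_congr fun x _ => ?_
    rw [← LinearMap.IsAlt.neg halt x v, neg_eq_zero]
  have hPd : finrank ℝ Iperp = 2 * g - k := by
    rw [hP, LinearMap.BilinForm.finrank_orthogonal hnd, hdim, hI]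
  have hkg : k ≤ 2 * g := by rw [← hI, ← hdim]; exact Submodule.finrank_le I
  have hB := aux_nondeg a hnd
  have hVd : finrank ℂ (ℂ ⊗[ℝ] V) = 2 * g := by rw [Module.finrank_baseChange, hdim]
  have hIC := aux_finrank I
  have hPC := aux_finrank Iperp
  rw [hI] at hIC
  rw [hPd] at hPC
  have h1 : F ⊓ I.baseChange ℂ = ⊥ := by
    rw [eq_bot_iff]
    rintro x ⟨hxF, hxI⟩
    by_contra hx
    obtain ⟨r, hr, h⟩ := hFp x hxF hx
    have h0 := aux_vanish a I I hIiso x hxI _ (aux_conj I x hxI)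
    rw [hermSymp, h0, mul_zero] at h
    have : r = 0 := by exact_mod_cast h.symm
    exact hr.ne' this
  have hFo : F = (LinearMap.BilinForm.baseChange ℂ a).orthogonal F := by
    apply Submodule.eq_of_le_of_finrank_eq
    · intro x hx y hy
      exact hFi y hy x hx
    · rw [LinearMap.BilinForm.finrank_orthogonal hB, hVd, hFd]; omega
  have hIo : I.baseChange ℂ =
      (LinearMap.BilinForm.baseChange ℂ a).orthogonal (Iperp.baseChange ℂ) := by
    apply Submodule.eq_of_le_of_finrank_eq
    · intro x hx y hy
      exact aux_vanish a Iperp I (fun u hu v hv => (hIperp u).1 hu v hv) y hy x hx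
    · rw [LinearMap.BilinForm.finrank_orthogonal hB, hVd, hIC, hPC]; omega
  have htop : F ⊔ Iperp.baseChange ℂ = ⊤ := by
    have hbot : (LinearMap.BilinForm.baseChange ℂ a).orthogonal (F ⊔ Iperp.baseChange ℂ) = ⊥ := by
      rw [eq_bot_iff, ← h1]
      refine le_inf ?_ ?_
      · conv_rhs => rw [hFo]
        exact LinearMap.BilinForm.orthogonal_le le_sup_left
      · rw [hIo]
        exact LinearMap.BilinForm.orthogonal_le le_sup_right
    have h := LinearMap.BilinForm.finrank_orthogonal hB (F ⊔ Iperp.baseChange ℂ)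
    rw [hbot, finrank_bot] at h
    apply Submodule.eq_top_of_finrank_eq
    have := Submodule.finrank_le (F ⊔ Iperp.baseChange ℂ)
    omega
  have h3 : (F ⊓ Iperp.baseChange ℂ) ⊓ I.baseChange ℂ = ⊥ := by
    rw [eq_bot_iff, ← h1]
    exact inf_le_inf_right _ inf_le_left
  refine ⟨h1, ?_, h3, ?_, Submodule.map_mono inf_le_right, ?_, ?_⟩
  · rw [Submodule.map_mkQ_eq_top, sup_comm]
    exact htop
  · have hinj : Function.Injective
        ((I.baseChange ℂ).mkQ.domRestrict (F ⊓ Iperp.baseChange ℂ)) := by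
      rw [← LinearMap.ker_eq_bot, LinearMap.ker_domRestrict, Submodule.ker_mkQ,
        ← Submodule.disjoint_iff_comap_eq_bot]
      exact disjoint_iff.2 h3
    have h := LinearMap.finrank_range_of_inj hinj
    rw [LinearMap.range_domRestrict] at h
    rw [h]
    have := Submodule.finrank_sup_add_finrank_inf_eq F (Iperp.baseChange ℂ)
    rw [htop, finrank_top, hVd, hFd, hPC] at this
    omega
  · exact fun v hv w hw => hFi v hv.1 w hw.1
  · intro v hv hvI
    exact hFp v hv.1 (fun h => hvI (h ▸ zero_mem _))

end
end

section
/- Let V₁ be a 2-dimensional real vector space with a nondegenerate alternating bilinear form a, and let s be the symmetric bilinear form on V₁ ⊗ V₁ with s(v⊗w, v'⊗w') = a(v,v')·a(w,w'). Then the restriction of s to the subspace Sym²V₁ ⊂ V₁ ⊗ V₁ of symmetric tensors (i.e., tensors fixed by the flip v⊗w ↦ w⊗v) is nondegenerate of signature (1,2). -/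
open TensorProduct Module

noncomputable section

/-- A real symmetric bilinear form `s` has signature `(p,q)` on the subspace `U₀`: `U₀`
is an `s`-orthogonal direct sum of a `p`-dimensional subspace on which `s` is positive
definite and a `q`-dimensional subspace on which `s` is negative definite. -/
def RealSig {U : Type*} [AddCommGroup U] [Module ℝ U]
    (s : LinearMap.BilinForm ℝ U) (U₀ : Submodule ℝ U) (p q : ℕ) : Prop :=
  ∃ P N : Submodule ℝ U, P ≤ U₀ ∧ N ≤ U₀ ∧ P ⊓ N = ⊥ ∧ P ⊔ N = U₀ ∧
    Module.finrank ℝ P = p ∧ Module.finrank ℝ N = q ∧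
    (∀ v ∈ P, ∀ w ∈ N, s v w = 0) ∧
    (∀ v ∈ P, v ≠ 0 → 0 < s v v) ∧
    (∀ w ∈ N, w ≠ 0 → s w w < 0)

/-- with `s` the symmetric form on `V₁ ⊗ V₁` induced by the symplectic form
`a`, the restriction of `s` to the subspace `Sym²V₁` of symmetric tensors (the tensors
fixed by the flip `v⊗w ↦ w⊗v`) is nondegenerate of signature `(1,2)`. -/
theorem sym_square_signature_one_two
    (V₁ : Type*) [AddCommGroup V₁] [Module ℝ V₁] [FiniteDimensional ℝ V₁]
    (hdim : Module.finrank ℝ V₁ = 2)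
    (a : LinearMap.BilinForm ℝ V₁) (halt : LinearMap.IsAlt a)
    (hnd : LinearMap.BilinForm.Nondegenerate a)
    (s : LinearMap.BilinForm ℝ (V₁ ⊗[ℝ] V₁))
    (hs : ∀ v w v' w' : V₁, s (v ⊗ₜ[ℝ] w) (v' ⊗ₜ[ℝ] w') = a v v' * a w w') :
    let Sym2V : Submodule ℝ (V₁ ⊗[ℝ] V₁) :=
      LinearMap.ker ((TensorProduct.comm ℝ V₁ V₁).toLinearMap - LinearMap.id)
    (∀ x ∈ Sym2V, (∀ y ∈ Sym2V, s x y = 0) → x = 0) ∧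
    RealSig s Sym2V 1 2 := by
  intro Sym2V
  have hswap : ∀ v w, a v w = - a w v := fun v w => (LinearMap.IsAlt.neg halt w v).symm
  let b : Basis (Fin 2) ℝ V₁ := Module.finBasisOfFinrankEq ℝ V₁ hdim
  obtain ⟨e, he⟩ : ∃ e, e = b 0 := ⟨_, rfl⟩
  obtain ⟨f, hf⟩ : ∃ f, f = b 1 := ⟨_, rfl⟩
  have hee : a e e = 0 := halt e
  have hff : a f f = 0 := halt f
  have hfe : a f e = - a e f := hswap f e
  obtain ⟨c, hc⟩ : ∃ c, c = a e f := ⟨_, rfl⟩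
  rw [← hc] at hfe
  have hef := hc.symm
  have hV : ∀ v : V₁, ∃ x y : ℝ, v = x • e + y • f := fun v =>
    ⟨b.repr v 0, b.repr v 1, by
      conv_lhs => rw [← b.sum_repr v]
      rw [Fin.sum_univ_two, he, hf]⟩
  have hc0 : c ≠ 0 := by
    intro h0
    have : e = 0 := by
      apply hnd.1
      intro v
      obtain ⟨x, y, rfl⟩ := hV v
      simp [hee, hef, h0]
    exact b.ne_zero 0 (he ▸ this)
  have hc2 : 0 < c * c := mul_self_pos.mpr hc0
  have hT : ∀ t : V₁ ⊗[ℝ] V₁, ∃ α β γ δ : ℝ,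
      t = α • (e ⊗ₜ[ℝ] e) + β • (e ⊗ₜ[ℝ] f) + γ • (f ⊗ₜ[ℝ] e) + δ • (f ⊗ₜ[ℝ] f) := by
    intro t
    let B := b.tensorProduct b
    refine ⟨B.repr t (0, 0), B.repr t (0, 1), B.repr t (1, 0), B.repr t (1, 1), ?_⟩
    conv_lhs => rw [← B.sum_repr t]
    rw [Fintype.sum_prod_type, Fin.sum_univ_two, Fin.sum_univ_two, Fin.sum_univ_two]
    simp only [B, Basis.tensorProduct_apply, he, hf]
    abel
  have memS : ∀ t, t ∈ Sym2V ↔ TensorProduct.comm ℝ V₁ V₁ t = t := by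
    intro t
    simp [Sym2V, LinearMap.mem_ker, sub_eq_zero]
  have hS : ∀ t ∈ Sym2V, ∃ α β δ : ℝ,
      t = α • (e ⊗ₜ[ℝ] e + f ⊗ₜ[ℝ] f) +
        (β • (e ⊗ₜ[ℝ] e - f ⊗ₜ[ℝ] f) + δ • (e ⊗ₜ[ℝ] f + f ⊗ₜ[ℝ] e)) := by
    intro t ht
    obtain ⟨α, β, γ, δ, rfl⟩ := hT t
    rw [memS] at ht
    have h1 := congrArg (fun z => s z (e ⊗ₜ[ℝ] f)) ht
    simp [hs, hee, hff, hef, hfe, hc0] at h1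
    subst h1
    refine ⟨(α + δ) / 2, (α - δ) / 2, β, ?_⟩
    module
  have hp : e ⊗ₜ[ℝ] e + f ⊗ₜ[ℝ] f ∈ Sym2V := by
    rw [memS]; simp
  have hn : e ⊗ₜ[ℝ] e - f ⊗ₜ[ℝ] f ∈ Sym2V := by
    rw [memS]; simp
  have hm : e ⊗ₜ[ℝ] f + f ⊗ₜ[ℝ] e ∈ Sym2V := by
    rw [memS]; simp [add_comm]
  obtain ⟨p, hpd⟩ : ∃ p, p = e ⊗ₜ[ℝ] e + f ⊗ₜ[ℝ] f := ⟨_, rfl⟩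
  obtain ⟨n, hnd'⟩ : ∃ n, n = e ⊗ₜ[ℝ] e - f ⊗ₜ[ℝ] f := ⟨_, rfl⟩
  obtain ⟨m, hmd⟩ : ∃ m, m = e ⊗ₜ[ℝ] f + f ⊗ₜ[ℝ] e := ⟨_, rfl⟩
  have spp : s p p = 2 * (c * c) := by
    simp [hpd, hs, hee, hff, hef, hfe]; ring
  have snn : s n n = -2 * (c * c) := by
    simp [hnd', hs, hee, hff, hef, hfe]; ring
  have smm : s m m = -2 * (c * c) := by
    simp [hmd, hs, hee, hff, hef, hfe]; ring
  have spn : s p n = 0 := by simp [hpd, hnd', hs, hee, hff, hef, hfe]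
  have snp : s n p = 0 := by simp [hpd, hnd', hs, hee, hff, hef, hfe]
  have spm : s p m = 0 := by simp [hpd, hmd, hs, hee, hff, hef, hfe]
  have smp : s m p = 0 := by simp [hpd, hmd, hs, hee, hff, hef, hfe]
  have snm : s n m = 0 := by simp [hnd', hmd, hs, hee, hff, hef, hfe]
  have smn : s m n = 0 := by simp [hnd', hmd, hs, hee, hff, hef, hfe]
  rw [← hpd] at hp
  rw [← hnd'] at hn
  rw [← hmd] at hm
  simp only [← hpd, ← hnd', ← hmd] at hS
  clear hpd hnd' hmd
  have hpos : ∀ v ∈ Submodule.span ℝ {p}, v ≠ 0 → 0 < s v v := by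
    intro v hv hv0
    obtain ⟨x, rfl⟩ := Submodule.mem_span_singleton.mp hv
    have hx : x ≠ 0 := by rintro rfl; simp at hv0
    have : s (x • p) (x • p) = 2 * ((x * x) * (c * c)) := by
      simp [spp]; ring
    rw [this]
    have := mul_self_pos.mpr hx
    positivity
  have hneg : ∀ v ∈ Submodule.span ℝ {n, m}, v ≠ 0 → s v v < 0 := by
    intro v hv hv0
    obtain ⟨x, y, rfl⟩ := Submodule.mem_span_pair.mp hv
    have hxy : 0 < x * x + y * y := by
      by_contra h
      have hx : x = 0 := by nlinarith [mul_self_nonneg x, mul_self_nonneg y]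
      have hy : y = 0 := by nlinarith [mul_self_nonneg x, mul_self_nonneg y]
      simp [hx, hy] at hv0
    have : s (x • n + y • m) (x • n + y • m) = -(2 * ((x * x + y * y) * (c * c))) := by
      simp [snn, smm, snm, smn]; ring
    rw [this]
    have : 0 < 2 * ((x * x + y * y) * (c * c)) := by positivity
    linarith
  have hp0 : p ≠ 0 := by
    rintro rfl
    simp at spp
    exact hc0 spp
  refine ⟨?_, Submodule.span ℝ {p}, Submodule.span ℝ {n, m}, ?_, ?_, ?_, ?_, ?_, ?_, ?_,
    hpos, hneg⟩
  · intro x hx h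
    obtain ⟨α, β, δ, rfl⟩ := hS x hx
    have h1 := h p hp
    have h2 := h n hn
    have h3 := h m hm
    simp [spp, snn, smm, spn, snp, spm, smp, snm, smn, hc0] at h1 h2 h3
    simp [h1, h2, h3]
  · rw [Submodule.span_le]; simpa using hp
  · rw [Submodule.span_le]
    rintro z (rfl | rfl)
    · exact hn
    · exact hm
  · rw [eq_bot_iff]
    rintro z ⟨h1, h2⟩
    by_contra h0
    exact lt_asymm (hpos z h1 h0) (hneg z h2 h0)
  · apply le_antisymm
    · refine sup_le ?_ ?_ <;> rw [Submodule.span_le]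
      · simpa using hp
      · rintro z (rfl | rfl)
        · exact hn
        · exact hm
    · intro z hz
      obtain ⟨α, β, δ, rfl⟩ := hS z hz
      exact Submodule.add_mem_sup (Submodule.mem_span_singleton.mpr ⟨α, rfl⟩)
        (Submodule.mem_span_pair.mpr ⟨β, δ, rfl⟩)
  · exact finrank_span_singleton hp0
  · have hli : LinearIndependent ℝ ![n, m] := by
      rw [LinearIndependent.pair_iff]
      intro x y hxy
      have h1 := congrArg (fun z => s z n) hxy
      have h2 := congrArg (fun z => s z m) hxy
      simp [snn, smm, snm, smn, hc0] at h1 h2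
      exact ⟨h1, h2⟩
    have := finrank_span_eq_card hli
    rw [Matrix.range_cons_cons_empty] at this
    simpa using this
  · intro v hv w hw
    obtain ⟨x, rfl⟩ := Submodule.mem_span_singleton.mp hv
    obtain ⟨y, z, rfl⟩ := Submodule.mem_span_pair.mp hw
    simp [spn, spm]

end
end

section
/- Let I ⊂ V be a 2-dimensional subspace with s|I×I = 0. Then for every v ∈ V⁺, the ℝ-linear map I → ℂ given by x ↦ s_ℂ(x⊗1, v) is bijective (i.e., the image of v in V_ℂ/I^⊥_ℂ ≅ Hom_ℝ(I,ℂ) has real rank 2). -/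
open TensorProduct Module

noncomputable section

variable {V : Type*} [AddCommGroup V] [Module ℝ V]

/-- The hermitian form `h(v,w) = s_ℂ(v, conj w)` associated to a real symmetric
bilinear form `s`. -/
def hermOrth (s : LinearMap.BilinForm ℝ V) (v w : ℂ ⊗[ℝ] V) : ℂ :=
  (LinearMap.BilinForm.baseChange ℂ s) v (conjC V w)

/-- The set `V⁺ = {v ∈ V_ℂ : s_ℂ(v,v) = 0, h(v,v) > 0}`. -/
def Vplus (s : LinearMap.BilinForm ℝ V) : Set (ℂ ⊗[ℝ] V) :=
  {v | (LinearMap.BilinForm.baseChange ℂ s) v v = 0 ∧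
    ∃ r : ℝ, 0 < r ∧ hermOrth s v v = r}

theorem exists_re_im (v : ℂ ⊗[ℝ] V) :
    ∃ a b : V, v = (1 : ℂ) ⊗ₜ[ℝ] a + Complex.I ⊗ₜ[ℝ] b := by
  induction v using TensorProduct.induction_on with
  | zero => exact ⟨0, 0, by simp⟩
  | tmul z w =>
    refine ⟨z.re • w, z.im • w, ?_⟩
    rw [← TensorProduct.smul_tmul, ← TensorProduct.smul_tmul, ← TensorProduct.add_tmul]
    congr 1
    apply Complex.ext <;> simp
  | add x y hx hy =>
    obtain ⟨a, b, rfl⟩ := hx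
    obtain ⟨c, d, rfl⟩ := hy
    refine ⟨a + c, b + d, ?_⟩
    rw [TensorProduct.tmul_add, TensorProduct.tmul_add]
    abel

theorem real_core [FiniteDimensional ℝ V] (n : ℕ)
    (hdim : Module.finrank ℝ V = n + 2)
    (s : LinearMap.BilinForm ℝ V) (hs : ∀ x y, s x y = s y x)
    (hsig : RealSig s ⊤ 2 n) (a b x : V) (r : ℝ) (hr : 0 < r)
    (haa : s a a = r) (hbb : s b b = r) (hab : s a b = 0)
    (hxx : s x x = 0) (hxa : s x a = 0) (hxb : s x b = 0) : x = 0 := by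
  obtain ⟨P, N, -, -, -, -, -, hN, -, -, hneg⟩ := hsig
  let f : (Fin 3 → ℝ) →ₗ[ℝ] V := Fintype.linearCombination ℝ ![a, b, x]
  have hker : LinearMap.ker (N.mkQ ∘ₗ f) ≠ ⊥ := by
    apply LinearMap.ker_ne_bot_of_finrank_lt
    have := N.finrank_quotient_add_finrank
    simp
    omega
  obtain ⟨c, hc, hc0⟩ := (Submodule.ne_bot_iff _).1 hker
  have hw : f c = c 0 • a + c 1 • b + c 2 • x := by
    simp [f, Fintype.linearCombination_apply, Fin.sum_univ_three]
  have hmem : f c ∈ N := by simpa using hc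
  have hval : s (f c) (f c) = (c 0 ^ 2 + c 1 ^ 2) * r := by
    rw [hw]
    simp [haa, hbb, hab, hxx, hxa, hxb, hs b a, hs a x, hs b x]
    ring
  have hw0 : f c = 0 := by
    by_contra h
    have := hneg _ hmem h
    rw [hval] at this
    have : 0 ≤ (c 0 ^ 2 + c 1 ^ 2) * r := by positivity
    linarith
  have h01 : c 0 ^ 2 + c 1 ^ 2 = 0 := by
    rw [hw0] at hval
    simp at hval
    rcases hval with h | h
    · exact h
    · exact absurd h hr.ne'
  have h0 : c 0 = 0 := by nlinarith [sq_nonneg (c 0), sq_nonneg (c 1)]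
  have h1 : c 1 = 0 := by nlinarith [sq_nonneg (c 0), sq_nonneg (c 1)]
  rw [hw, h0, h1] at hw0
  simp at hw0
  rcases hw0 with h | h
  · exact absurd (by ext i; fin_cases i <;> simp [h0, h1, h]) hc0
  · exact h

/-- let `I ⊂ V` be a 2-dimensional subspace with `s|I×I = 0`.  Then for
every `v ∈ V⁺` the `ℝ`-linear map `I → ℂ`, `x ↦ s_ℂ(x⊗1, v)`, is bijective (i.e. the
image of `v` in `V_ℂ/I^⊥_ℂ ≅ Hom_ℝ(I,ℂ)` has real rank 2). -/
theorem rank_two_projection_on_isotropic_plane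
    [FiniteDimensional ℝ V] (n : ℕ) (hn : 2 ≤ n)
    (hdim : Module.finrank ℝ V = n + 2)
    (s : LinearMap.BilinForm ℝ V) (hsymm : LinearMap.IsSymm s)
    (hnd : LinearMap.BilinForm.Nondegenerate s)
    (hsig : RealSig s ⊤ 2 n)
    (I : Submodule ℝ V) (hIdim : Module.finrank ℝ I = 2)
    (hIiso : ∀ x ∈ I, ∀ y ∈ I, s x y = 0)
    (v : ℂ ⊗[ℝ] V) (hv : v ∈ Vplus s) :
    Function.Bijective
      (fun x : I => (LinearMap.BilinForm.baseChange ℂ s) ((1 : ℂ) ⊗ₜ[ℝ] (x : V)) v) := by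
  have hs : ∀ x y, s x y = s y x := fun x y => by simpa using hsymm.eq x y
  obtain ⟨a, b, rfl⟩ := exists_re_im v
  obtain ⟨h1, r, hr, h2⟩ := hv
  have hconj : conjC V ((1 : ℂ) ⊗ₜ[ℝ] a + Complex.I ⊗ₜ[ℝ] b)
      = (1 : ℂ) ⊗ₜ[ℝ] a + (-Complex.I) ⊗ₜ[ℝ] b := by
    simp [conjC]
  rw [hermOrth, hconj] at h2
  have e1 := congrArg Complex.re h1
  have e2 := congrArg Complex.im h1
  have e3 := congrArg Complex.re h2
  simp [hs b a] at e1 e2 e3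
  have hlin : ∀ x : V, (LinearMap.BilinForm.baseChange ℂ s) ((1 : ℂ) ⊗ₜ[ℝ] x)
      ((1 : ℂ) ⊗ₜ[ℝ] a + Complex.I ⊗ₜ[ℝ] b) = (s x a : ℂ) + s x b * Complex.I := by
    intro x
    simp [mul_comm]
  let g : I →ₗ[ℝ] ℂ :=
    { toFun := fun x => (LinearMap.BilinForm.baseChange ℂ s) ((1 : ℂ) ⊗ₜ[ℝ] (x : V))
        ((1 : ℂ) ⊗ₜ[ℝ] a + Complex.I ⊗ₜ[ℝ] b)
      map_add' := fun x y => by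
        simp only [hlin]
        simp
        ring
      map_smul' := fun t x => by
        simp only [hlin]
        simp
        ring }
  have hinj : Function.Injective g := by
    rw [← LinearMap.ker_eq_bot, LinearMap.ker_eq_bot']
    intro x hx
    have hx' : (s x a : ℂ) + s x b * Complex.I = 0 := (hlin x).symm.trans hx
    have f1 := congrArg Complex.re hx'
    have f2 := congrArg Complex.im hx'
    simp at f1 f2
    apply Subtype.ext
    exact real_core n hdim s hs hsig a b x (r / 2) (by positivity) (by linarith) (by linarith)
      (by linarith) (hIiso x x.2 x x.2) f1 f2
  exact ⟨hinj, (LinearMap.injective_iff_surjective_of_finrank_eq_finrank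
    (by rw [hIdim, Complex.finrank_real_complex])).1 hinj⟩

end
end
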